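/- Assume 0 < η_i < 1/‖A_i‖² for i = 1, …, p and that the x₀-minimal norm solution x† satisfies the source condition x† − x₀ = A^* λ† for some λ† = (λ_1†, …, λ_p†) ∈ Y. Then for all integers n ≥ 0 there holds E[‖x_n^δ − x†‖²] ≤ 2 p M₀ / (c₀ (n+1)) + 2 η̄ n δ² / (c₀ p), where M₀ := ‖x₀ − x†‖² + c₀ Σ_{i=1}^p (1/η_i) ‖λ_i†‖². -/

import Mathlib

/-- Expectation with respect to the first `m` i.i.d. uniformly distributed indices:
for a quantity `f` determined by the coordinates `i_0, …, i_{m-1}` of the sample path,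
`avg p hp m f = p^{-m} ∑_{(i_0,…,i_{m-1}) ∈ {1,…,p}^m} f`. -/
noncomputable def avg (p : ℕ) (hp : 0 < p) (m : ℕ) (f : (ℕ → Fin p) → ℝ) : ℝ :=
  (∑ σ : Fin m → Fin p, f (fun k => if h : k < m then σ ⟨k, h⟩ else ⟨0, hp⟩)) / (p : ℝ) ^ m

section Avg

variable {p : ℕ} (hp : 0 < p)

lemma avg_zero_const (f : (ℕ → Fin p) → ℝ) (c : ℝ) (hf : ∀ ω, f ω = c) : avg p hp 0 f = c := by
  simp [avg, hf]

lemma avg_mono (m : ℕ) {f g : (ℕ → Fin p) → ℝ} (h : ∀ ω, f ω ≤ g ω) :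
    avg p hp m f ≤ avg p hp m g := by
  unfold avg
  gcongr
  exact h _

lemma avg_add (m : ℕ) (f g : (ℕ → Fin p) → ℝ) :
    avg p hp m (fun ω => f ω + g ω) = avg p hp m f + avg p hp m g := by
  simp only [avg, Finset.sum_add_distrib, add_div]

lemma avg_const_mul (m : ℕ) (c : ℝ) (f : (ℕ → Fin p) → ℝ) :
    avg p hp m (fun ω => c * f ω) = c * avg p hp m f := by
  simp only [avg, ← Finset.mul_sum, mul_div_assoc]

lemma avg_const (m : ℕ) (c : ℝ) : avg p hp m (fun _ => c) = c := by
  have : (p : ℝ) ≠ 0 := by positivity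
  simp [avg]
  field_simp

lemma avg_succ (m : ℕ) (f : (ℕ → Fin p) → ℝ) :
    avg p hp (m + 1) f = avg p hp m (fun ω => (p : ℝ)⁻¹ * ∑ i, f (Function.update ω m i)) := by
  have hp' : (p : ℝ) ≠ 0 := by positivity
  rw [avg_const_mul]
  unfold avg
  rw [← (Fin.snocEquiv (fun _ : Fin (m + 1) => Fin p)).sum_comp, Fintype.sum_prod_type,
    Finset.sum_comm]
  have key : ∀ (σ : Fin m → Fin p) (i : Fin p),
      (fun k => if h : k < m + 1 then
        (Fin.snocEquiv (fun _ : Fin (m + 1) => Fin p)) (i, σ) ⟨k, h⟩ else ⟨0, hp⟩) =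
      Function.update (fun k => if h : k < m then σ ⟨k, h⟩ else ⟨0, hp⟩) m i := by
    intro σ i
    funext k
    rcases lt_trichotomy k m with h | h | h
    · simp [Fin.snocEquiv, Fin.snoc, h, h.ne, Nat.lt_succ_of_lt h]
    · subst h
      simp [Fin.snocEquiv, Fin.snoc]
    · have h1 : ¬ k < m + 1 := by omega
      have h2 : ¬ k < m := by omega
      simp [h1, h2, h.ne']
  simp only [key]
  rw [pow_succ]
  field_simp

lemma avg_succ_of_update_eq (m : ℕ) (f : (ℕ → Fin p) → ℝ)
    (hf : ∀ ω i, f (Function.update ω m i) = f ω) : avg p hp (m + 1) f = avg p hp m f := by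
  have hp' : (p : ℝ) ≠ 0 := by positivity
  rw [avg_succ]
  congr 1
  funext ω
  simp [hf, hp']

lemma avg_le_of_sum_update_le (V : ℕ → (ℕ → Fin p) → ℝ) (C : ℝ)
    (h : ∀ n ω, ∑ i, V (n + 1) (Function.update ω n i) ≤ p * (V n ω + C)) (n : ℕ) :
    avg p hp n (V n) ≤ avg p hp 0 (V 0) + n * C := by
  have hp' : (0 : ℝ) < p := by positivity
  induction n with
  | zero => simp
  | succ n ih =>
    have h1 : avg p hp (n + 1) (V (n + 1)) ≤ avg p hp n (fun ω => V n ω + C) := by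
      rw [avg_succ]
      refine avg_mono hp n fun ω => ?_
      rw [inv_mul_le_iff₀ hp']
      exact h n ω
    rw [avg_add, avg_const] at h1
    push_cast
    linarith

end Avg

lemma sum_apply_update {p : ℕ} {Y : Fin p → Type*} {M : Type*} [AddCommGroup M] (F : ∀ j, Y j → M) (μ : ∀ j, Y j)
    (i : Fin p) (v : Y i) :
    ∑ j, F j (Function.update μ i v j) = ∑ j, F j (μ j) - F i (μ i) + F i v := by
  rw [← Finset.add_sum_erase _ _ (Finset.mem_univ i),
    ← Finset.add_sum_erase _ (fun j => F j (μ j)) (Finset.mem_univ i)]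
  have : ∑ j ∈ Finset.univ.erase i, F j (Function.update μ i v j)
      = ∑ j ∈ Finset.univ.erase i, F j (μ j) := by
    refine Finset.sum_congr rfl fun j hj => ?_
    rw [Function.update_of_ne (Finset.ne_of_mem_erase hj)]
  rw [this]
  simp only [Function.update_self]
  abel

section Iterates

variable {p : ℕ} {X : Type*} [NormedAddCommGroup X] [InnerProductSpace ℝ X] [CompleteSpace X]
  {Y : Fin p → Type*} [∀ i, NormedAddCommGroup (Y i)] [∀ i, InnerProductSpace ℝ (Y i)]
  [∀ i, CompleteSpace (Y i)]

variable (A : ∀ i, X →L[ℝ] Y i) (η : Fin p → ℝ) (x₀ : X)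

/-- The primal point `x₀ + A* μ` associated with the dual variable `μ`. -/
noncomputable def primal (μ : ∀ i, Y i) : X := x₀ + ∑ j, (A j).adjoint (μ j)

/-- The stochastic heavy ball method in dual form: the state after `n` steps is the pair
`(μ_n, x_n)`, where `μ_n` is updated by the residual at `x_n` and `x_n` is the running mean
of the points `x₀ + A* μ_k`, `k ≤ n`. -/
noncomputable def dualState (b : ∀ i, Y i) (ω : ℕ → Fin p) : ℕ → (∀ i, Y i) × X
  | 0 => (0, x₀)
  | n + 1 =>
    let s := dualState b ω n
    let μ := Function.update s.1 (ω n) (s.1 (ω n) - η (ω n) • (A (ω n) s.2 - b (ω n)))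
    (μ, ((n : ℝ) + 2)⁻¹ • (primal A x₀ μ + ((n : ℝ) + 1) • s.2))

variable (b : ∀ i, Y i)

lemma dualState_congr {ω ω' : ℕ → Fin p} (n : ℕ) (h : ∀ k < n, ω k = ω' k) :
    dualState A η x₀ b ω n = dualState A η x₀ b ω' n := by
  induction n with
  | zero => rfl
  | succ n ih =>
    simp only [dualState, ih fun k hk => h k (hk.trans n.lt_succ_self)]
    rw [h n n.lt_succ_self]

lemma dualState_update (ω : ℕ → Fin p) {k n : ℕ} (hk : k ≤ n) (i : Fin p) :
    dualState A η x₀ b (Function.update ω n i) k = dualState A η x₀ b ω k :=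
  dualState_congr A η x₀ b k fun j hj => Function.update_of_ne (by omega) _ _

lemma dualState_update_succ_fst (ω : ℕ → Fin p) (n : ℕ) (i : Fin p) :
    (dualState A η x₀ b (Function.update ω n i) (n + 1)).1 =
      Function.update (dualState A η x₀ b ω n).1 i ((dualState A η x₀ b ω n).1 i -
        η i • (A i (dualState A η x₀ b ω n).2 - b i)) := by
  simp only [dualState, dualState_update A η x₀ b ω le_rfl i]
  rw [Function.update_self]

lemma primal_update (μ : ∀ i, Y i) (i : Fin p) (r : Y i) :
    primal A x₀ (Function.update μ i (μ i - η i • r)) =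
      primal A x₀ μ - η i • (A i).adjoint r := by
  unfold primal
  rw [sum_apply_update (fun j v => (A j).adjoint v)]
  simp only [map_sub, map_smul]
  abel

lemma primal_dualState_succ (ω : ℕ → Fin p) (n : ℕ) :
    primal A x₀ (dualState A η x₀ b ω (n + 1)).1 = primal A x₀ (dualState A η x₀ b ω n).1 -
      η (ω n) • (A (ω n)).adjoint (A (ω n) (dualState A η x₀ b ω n).2 - b (ω n)) := by
  simp only [dualState, primal_update]

lemma dualState_succ_snd (ω : ℕ → Fin p) (n : ℕ) :
    (dualState A η x₀ b ω (n + 1)).2 = ((n : ℝ) + 2)⁻¹ •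
      (primal A x₀ (dualState A η x₀ b ω (n + 1)).1
        + ((n : ℝ) + 1) • (dualState A η x₀ b ω n).2) := rfl

lemma primal_dualState (ω : ℕ → Fin p) (n : ℕ) :
    primal A x₀ (dualState A η x₀ b ω n).1 =
      ((n : ℝ) + 1) • (dualState A η x₀ b ω n).2 -
        (n : ℝ) • (dualState A η x₀ b ω (n - 1)).2 := by
  cases n with
  | zero => simp [dualState, primal]
  | succ n =>
    have h : (n : ℝ) + 1 + 1 = n + 2 := by ring
    have h2 : (n : ℝ) + 2 ≠ 0 := by positivity
    rw [dualState_succ_snd]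
    push_cast
    rw [h, smul_inv_smul₀ h2]
    simp

lemma eq_dualState (ω : ℕ → Fin p) (x : ℕ → X) (hx0 : x 0 = x₀)
    (hx : ∀ n : ℕ, x (n + 1) = x n
      - (((n : ℝ) + 2)⁻¹ * η (ω n)) • ((A (ω n)).adjoint ((A (ω n)) (x n) - b (ω n)))
      + ((n : ℝ) / ((n : ℝ) + 2)) • (x n - x (n - 1))) (n : ℕ) :
    x n = (dualState A η x₀ b ω n).2 := by
  induction n using Nat.strong_induction_on with
  | _ n ih =>
    cases n with
    | zero => simpa [dualState] using hx0
    | succ n =>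
      have h2 : (n : ℝ) + 2 ≠ 0 := by positivity
      rw [hx, dualState_succ_snd, primal_dualState_succ, primal_dualState,
        ih n (by omega), ih (n - 1) (by omega)]
      match_scalars
      <;> field_simp
      <;> ring

end Iterates

lemma norm_sq_sub_add_mul_le {Y : Type*} [SeminormedAddCommGroup Y] (a ν : Y) {h c δ : ℝ} (hh : 0 ≤ h) (hc : 0 < c) (hch : c ≤ 1 - h)
    (hν : ‖ν‖ ≤ δ) :
    ‖ν‖ ^ 2 - ‖a‖ ^ 2 + h * ‖a - ν‖ ^ 2 ≤ δ ^ 2 / c := by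
  have h1 : ‖a - ν‖ ^ 2 ≤ (‖a‖ + ‖ν‖) ^ 2 := by gcongr; exact norm_sub_le _ _
  have h2 : ‖ν‖ ^ 2 - ‖a‖ ^ 2 + h * (‖a‖ + ‖ν‖) ^ 2 ≤ ‖ν‖ ^ 2 / (1 - h) := by
    rw [le_div_iff₀ (by linarith)]
    nlinarith [sq_nonneg ((1 - h) * ‖a‖ - h * ‖ν‖)]
  calc _ ≤ ‖ν‖ ^ 2 - ‖a‖ ^ 2 + h * (‖a‖ + ‖ν‖) ^ 2 := by gcongr
    _ ≤ ‖ν‖ ^ 2 / (1 - h) := h2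
    _ ≤ δ ^ 2 / c := by gcongr

section Step

variable {X Y : Type*} [NormedAddCommGroup X] [InnerProductSpace ℝ X] [CompleteSpace X]
  [NormedAddCommGroup Y] [InnerProductSpace ℝ Y] [CompleteSpace Y]

lemma norm_sub_smul_adjoint_sq_le (T : X →L[ℝ] Y) {η t : ℝ} (hη : 0 ≤ η) (ht : 0 ≤ t)
    (u d d' : X) (ν : Y) (hu : u = (t + 1) • d - t • d') :
    ‖u - η • T.adjoint (T d - ν)‖ ^ 2 + η * ((t + 1) * ‖T d - ν‖ ^ 2) ≤
      ‖u‖ ^ 2 + η * (t * ‖T d' - ν‖ ^ 2)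
        + η * (‖ν‖ ^ 2 - ‖T d‖ ^ 2 + η * ‖T‖ ^ 2 * ‖T d - ν‖ ^ 2) := by
  have h1 : ‖u - η • T.adjoint (T d - ν)‖ ^ 2 =
      ‖u‖ ^ 2 - 2 * η * inner ℝ (T u) (T d - ν) + η ^ 2 * ‖T.adjoint (T d - ν)‖ ^ 2 := by
    rw [norm_sub_sq_real, inner_smul_right, ContinuousLinearMap.adjoint_inner_right, norm_smul,
      mul_pow, Real.norm_eq_abs, sq_abs]
    ring
  have h2 : ‖T.adjoint (T d - ν)‖ ^ 2 ≤ ‖T‖ ^ 2 * ‖T d - ν‖ ^ 2 := by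
    rw [← mul_pow]
    gcongr
    calc _ ≤ ‖T.adjoint‖ * ‖T d - ν‖ := ContinuousLinearMap.le_opNorm _ _
      _ = _ := by rw [LinearIsometryEquiv.norm_map]
  have h3 : T u = T d + t • ((T d - ν) - (T d' - ν)) := by
    rw [hu]; simp only [map_sub, map_smul]; module
  have h4 : 2 * inner ℝ (T d) (T d - ν) = ‖T d - ν‖ ^ 2 + ‖T d‖ ^ 2 - ‖ν‖ ^ 2 := by
    have := norm_sub_sq_real (T d) (T d - ν)
    rw [sub_sub_cancel] at this
    linarith
  have h5 : ‖T d - ν‖ ^ 2 - ‖T d' - ν‖ ^ 2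
      ≤ 2 * inner ℝ ((T d - ν) - (T d' - ν)) (T d - ν) := by
    have := norm_sub_sq_real (T d - ν) ((T d - ν) - (T d' - ν))
    rw [sub_sub_cancel, real_inner_comm] at this
    nlinarith [sq_nonneg ‖(T d - ν) - (T d' - ν)‖]
  rw [h1, h3, inner_add_left, real_inner_smul_left]
  have h6 := mul_le_mul_of_nonneg_left h2 (sq_nonneg η)
  have h7 := mul_le_mul_of_nonneg_left h5 (mul_nonneg hη ht)
  linear_combination h6 + h7 - η * h4

end Step

section Estimates

variable {p : ℕ} (hp : 0 < p) {X : Type*} [NormedAddCommGroup X] [InnerProductSpace ℝ X]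
  [CompleteSpace X] {Y : Fin p → Type*} [∀ i, NormedAddCommGroup (Y i)]
  [∀ i, InnerProductSpace ℝ (Y i)] [∀ i, CompleteSpace (Y i)]
  (A : ∀ i, X →L[ℝ] Y i) {η : Fin p → ℝ} (hη : ∀ i, 0 < η i)
  {c : ℝ} (hc : 0 < c) (hcle : ∀ i, c ≤ 1 - η i * ‖A i‖ ^ 2)

include hη hc hcle in
/-- Convergence of the iterates with exact data under the source condition. -/
theorem avg_norm_sq_le_of_exact (y : ∀ i, Y i) (x₀ xdag : X) (hdag : ∀ i, A i xdag = y i)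
    (lam : ∀ j, Y j) (hsource : xdag - x₀ = ∑ j, (A j).adjoint (lam j)) (n : ℕ) :
    avg p hp n (fun ω => ‖(dualState A η x₀ y ω n).2 - xdag‖ ^ 2) ≤
      p * (‖x₀ - xdag‖ ^ 2 + c * ∑ i, (η i)⁻¹ * ‖lam i‖ ^ 2) / (c * ((n : ℝ) + 1)) := by
  have hp' : (0 : ℝ) < p := by positivity
  set x : (ℕ → Fin p) → ℕ → X := fun ω k => (dualState A η x₀ y ω k).2 - xdag with hx
  set μ : (ℕ → Fin p) → ℕ → ∀ i, Y i := fun ω k => (dualState A η x₀ y ω k).1 with hμ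
  set V : ℕ → (ℕ → Fin p) → ℝ := fun k ω =>
    ‖primal A x₀ (μ ω k) - xdag‖ ^ 2 + k / p * ∑ j, η j * ‖A j (x ω (k - 1))‖ ^ 2
      + c * (∑ j, (η j)⁻¹ * ‖μ ω k j - lam j‖ ^ 2 + k / p * ‖x ω (k - 1)‖ ^ 2) with hV
  have hxu : ∀ ω (k : ℕ) m i, k ≤ m → x (Function.update ω m i) k = x ω k := by
    intro ω k m i hk
    simp only [hx, dualState_update A η x₀ y ω hk i]
  have hstep : ∀ n ω, ∑ i, V (n + 1) (Function.update ω n i) ≤ p * (V n ω + 0) := by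
    intro n ω
    set d := x ω n with hd
    set d' := x ω (n - 1) with hd'
    set u := primal A x₀ (μ ω n) - xdag with hu
    have hud : u = ((n : ℝ) + 1) • d - (n : ℝ) • d' := by
      rw [hu, hμ, primal_dualState]
      simp only [hd, hd', hx]
      module
    have hres : ∀ i, A i (dualState A η x₀ y ω n).2 - y i = A i d := by
      intro i
      simp [hd, hx, hdag]
    have hu' : ∀ i, primal A x₀ (μ (Function.update ω n i) (n + 1)) - xdag
        = u - η i • (A i).adjoint (A i d) := by
      intro i
      simp only [hμ, dualState_update_succ_fst, primal_update, hres, hu]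
      abel
    have hprim : ∀ i, ‖u - η i • (A i).adjoint (A i d)‖ ^ 2
        + η i * (((n : ℝ) + 1) * ‖A i d‖ ^ 2) ≤
        ‖u‖ ^ 2 + η i * (n * ‖A i d'‖ ^ 2) - c * (η i * ‖A i d‖ ^ 2) := by
      intro i
      have h := norm_sub_smul_adjoint_sq_le (A i) (hη i).le n.cast_nonneg u d d' 0 hud
      simp only [sub_zero, norm_zero] at h
      have h' := mul_le_mul_of_nonneg_right (hcle i)
        (mul_nonneg (hη i).le (sq_nonneg ‖A i d‖))
      linear_combination h + h'
    have hdual : ∀ i, ∑ j, (η j)⁻¹ * ‖μ (Function.update ω n i) (n + 1) j - lam j‖ ^ 2 =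
        ∑ j, (η j)⁻¹ * ‖μ ω n j - lam j‖ ^ 2 - 2 * inner ℝ (μ ω n i - lam i) (A i d)
          + η i * ‖A i d‖ ^ 2 := by
      intro i
      have hηi := (hη i).ne'
      simp only [hμ, dualState_update_succ_fst, hres]
      rw [sum_apply_update (fun j v => (η j)⁻¹ * ‖v - lam j‖ ^ 2), sub_right_comm,
        norm_sub_sq_real _ (η i • _), inner_smul_right, norm_smul, mul_pow, Real.norm_eq_abs,
        sq_abs]
      field_simp
      ring
    have hinner : ∑ i, inner ℝ (μ ω n i - lam i) (A i d) = inner ℝ u d := by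
      have : u = ∑ i, (A i).adjoint (μ ω n i - lam i) := by
        simp only [map_sub, Finset.sum_sub_distrib, ← hsource, hu, primal]
        abel
      rw [this, sum_inner]
      simp only [ContinuousLinearMap.adjoint_inner_left]
    have hmono : ((n : ℝ) + 1) * ‖d‖ ^ 2 - n * ‖d'‖ ^ 2 ≤ 2 * inner ℝ u d := by
      have h := norm_sub_sq_real d' d
      rw [hud, inner_sub_left, real_inner_smul_left, real_inner_smul_left,
        real_inner_self_eq_norm_sq]
      have := mul_nonneg (n.cast_nonneg (α := ℝ)) (sq_nonneg ‖d' - d‖)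
      nlinarith [sq_nonneg ‖d‖]
    have hsum := Finset.sum_le_sum fun i (_ : i ∈ Finset.univ) => hprim i
    simp only [Finset.sum_add_distrib, Finset.sum_sub_distrib, Finset.sum_const,
      Finset.card_univ, Fintype.card_fin, nsmul_eq_mul, mul_left_comm (η _),
      ← Finset.mul_sum] at hsum
    simp only [hV, add_tsub_cancel_right, hu', hdual, hxu ω n n _ le_rfl,
      Finset.sum_add_distrib, Finset.sum_sub_distrib, ← Finset.mul_sum, hinner,
      Finset.sum_const, Finset.card_univ, Fintype.card_fin, nsmul_eq_mul]
    have hcm := mul_le_mul_of_nonneg_left hmono hc.le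
    simp only [← hd, ← hd', ← hu]
    push_cast
    field_simp
    linear_combination hsum + hcm
  have h0 : avg p hp 0 (V 0) = ‖x₀ - xdag‖ ^ 2 + c * ∑ i, (η i)⁻¹ * ‖lam i‖ ^ 2 := by
    refine avg_zero_const hp _ _ fun ω => ?_
    simp [hV, hμ, dualState, primal]
  have hmain := avg_le_of_sum_update_le hp V 0 hstep (n + 1)
  rw [h0, mul_zero, add_zero] at hmain
  have hlow : c * ((n + 1) / p) * avg p hp n (fun ω => ‖x ω n‖ ^ 2)
      ≤ avg p hp (n + 1) (V (n + 1)) := by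
    rw [← avg_succ_of_update_eq hp n _ fun ω i => by rw [hxu ω n n i le_rfl], ← avg_const_mul]
    refine avg_mono hp _ fun ω => ?_
    have h1 : 0 ≤ ∑ j, η j * ‖A j (x ω n)‖ ^ 2 :=
      Finset.sum_nonneg fun j _ => mul_nonneg (hη j).le (sq_nonneg _)
    have h2 : 0 ≤ ∑ j, (η j)⁻¹ * ‖μ ω (n + 1) j - lam j‖ ^ 2 :=
      Finset.sum_nonneg fun j _ => mul_nonneg (inv_nonneg.2 (hη j).le) (sq_nonneg _)
    simp only [hV, add_tsub_cancel_right]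
    push_cast
    have h3 : 0 ≤ ((n : ℝ) + 1) / p * ∑ j, η j * ‖A j (x ω n)‖ ^ 2 := by positivity
    nlinarith [sq_nonneg ‖primal A x₀ (μ ω (n + 1)) - xdag‖, mul_nonneg hc.le h2]
  have := hlow.trans hmain
  rw [le_div_iff₀ (by positivity)]
  rw [← mul_div_assoc, div_mul_eq_mul_div, div_le_iff₀ hp'] at this
  linarith

include hη hc hcle in
/-- Propagation of the data noise. -/
theorem avg_norm_sq_sub_le (y yδ : ∀ i, Y i) (δ : Fin p → ℝ) (hnoise : ∀ i, ‖yδ i - y i‖ ≤ δ i)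
    (x₀ : X) (n : ℕ) :
    avg p hp n (fun ω =>
      ‖(dualState A η x₀ yδ ω n).2 - (dualState A η x₀ y ω n).2‖ ^ 2) ≤
      n * ((∑ i, η i * δ i ^ 2) / (c * p)) := by
  have hp' : (0 : ℝ) < p := by positivity
  set C := (∑ i, η i * δ i ^ 2) / (c * p) with hC
  have hC0 : 0 ≤ C := div_nonneg
    (Finset.sum_nonneg fun j _ => mul_nonneg (hη j).le (sq_nonneg _)) (by positivity)
  set d : (ℕ → Fin p) → ℕ → X := fun ω k =>
    (dualState A η x₀ yδ ω k).2 - (dualState A η x₀ y ω k).2 with hd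
  set u : (ℕ → Fin p) → ℕ → X := fun ω k =>
    primal A x₀ (dualState A η x₀ yδ ω k).1 - primal A x₀ (dualState A η x₀ y ω k).1 with hu
  set ν : ∀ i, Y i := fun i => yδ i - y i with hν
  set V : ℕ → (ℕ → Fin p) → ℝ := fun k ω =>
    ‖u ω k‖ ^ 2 + k / p * ∑ j, η j * ‖A j (d ω (k - 1)) - ν j‖ ^ 2 with hV
  have hdu : ∀ ω (k : ℕ) m i, k ≤ m → d (Function.update ω m i) k = d ω k := by
    intro ω k m i hk
    simp only [hd, dualState_update A η x₀ _ ω hk i]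
  have hstep : ∀ n ω, ∑ i, V (n + 1) (Function.update ω n i) ≤ p * (V n ω + C) := by
    intro n ω
    have hud : u ω n = ((n : ℝ) + 1) • d ω n - (n : ℝ) • d ω (n - 1) := by
      simp only [hu, primal_dualState, hd]
      module
    have hu' : ∀ i, u (Function.update ω n i) (n + 1)
        = u ω n - η i • (A i).adjoint (A i (d ω n) - ν i) := by
      intro i
      simp only [hu, hd, hν, dualState_update_succ_fst, primal_update, map_sub]
      module
    have hprim : ∀ i, ‖u ω n - η i • (A i).adjoint (A i (d ω n) - ν i)‖ ^ 2
        + η i * (((n : ℝ) + 1) * ‖A i (d ω n) - ν i‖ ^ 2) ≤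
        ‖u ω n‖ ^ 2 + η i * (n * ‖A i (d ω (n - 1)) - ν i‖ ^ 2) + c⁻¹ * (η i * δ i ^ 2) := by
      intro i
      have h := norm_sub_smul_adjoint_sq_le (A i) (hη i).le n.cast_nonneg _ _ _ (ν i) hud
      have h' := mul_le_mul_of_nonneg_left (norm_sq_sub_add_mul_le (A i (d ω n)) (ν i)
        (mul_nonneg (hη i).le (sq_nonneg ‖A i‖)) hc (hcle i) (hnoise i)) (hη i).le
      rw [div_eq_inv_mul] at h'
      linear_combination h + h'
    have hsum := Finset.sum_le_sum fun i (_ : i ∈ Finset.univ) => hprim i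
    simp only [Finset.sum_add_distrib, Finset.sum_const,
      Finset.card_univ, Fintype.card_fin, nsmul_eq_mul, mul_left_comm (η _),
      ← Finset.mul_sum] at hsum
    simp only [hV, add_tsub_cancel_right, hu', hdu ω n n _ le_rfl,
      Finset.sum_add_distrib, Finset.sum_const, Finset.card_univ, Fintype.card_fin,
      nsmul_eq_mul]
    have hCp : p * C = c⁻¹ * ∑ i, η i * δ i ^ 2 := by
      rw [hC]; field_simp
    rw [mul_add, hCp]
    push_cast
    have e1 : ∀ t s : ℝ, (p : ℝ) * (t / p * s) = t * s := fun t s => by field_simp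
    rw [mul_add, e1, e1]
    linarith
  have h0 : avg p hp 0 (V 0) = 0 := by
    refine avg_zero_const hp _ _ fun ω => ?_
    simp [hV, hu, dualState]
  have hub : ∀ k, avg p hp k (fun ω => ‖u ω k‖ ^ 2) ≤ k * C := by
    intro k
    have h := avg_le_of_sum_update_le hp V C hstep k
    rw [h0, zero_add] at h
    refine le_trans (avg_mono hp k fun ω => ?_) h
    have h1 : 0 ≤ ∑ j, η j * ‖A j (d ω (k - 1)) - ν j‖ ^ 2 :=
      Finset.sum_nonneg fun j _ => mul_nonneg (hη j).le (sq_nonneg _)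
    simp only [hV]
    have : 0 ≤ (k : ℝ) / p * ∑ j, η j * ‖A j (d ω (k - 1)) - ν j‖ ^ 2 := by positivity
    linarith
  change avg p hp n (fun ω => ‖d ω n‖ ^ 2) ≤ n * C
  induction n with
  | zero =>
    rw [avg_zero_const hp _ 0 fun ω => by simp [hd, dualState]]
    simp
  | succ n ih =>
    have hn : (0 : ℝ) < n + 2 := by positivity
    have hconv : ∀ ω, ‖d ω (n + 1)‖ ^ 2 ≤
        ((n : ℝ) + 2)⁻¹ * (‖u ω (n + 1)‖ ^ 2 + ((n : ℝ) + 1) * ‖d ω n‖ ^ 2) := by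
      intro ω
      have h1 : d ω (n + 1) = ((n : ℝ) + 2)⁻¹ • (u ω (n + 1) + ((n : ℝ) + 1) • d ω n) := by
        simp only [hd, hu, dualState_succ_snd]
        module
      have h2 : ‖u ω (n + 1) + ((n : ℝ) + 1) • d ω n‖ ≤
          ‖u ω (n + 1)‖ + ((n : ℝ) + 1) * ‖d ω n‖ := by
        refine (norm_add_le _ _).trans_eq ?_
        rw [norm_smul, Real.norm_of_nonneg (by positivity)]
      have h3 : ‖u ω (n + 1) + ((n : ℝ) + 1) • d ω n‖ ^ 2 ≤
          ((n : ℝ) + 2) * (‖u ω (n + 1)‖ ^ 2 + ((n : ℝ) + 1) * ‖d ω n‖ ^ 2) := by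
        refine (pow_le_pow_left₀ (norm_nonneg _) h2 2).trans ?_
        nlinarith [mul_nonneg (by positivity : (0 : ℝ) ≤ n + 1)
          (sq_nonneg (‖u ω (n + 1)‖ - ‖d ω n‖))]
      rw [h1, norm_smul, mul_pow, Real.norm_of_nonneg (by positivity)]
      calc _ ≤ (((n : ℝ) + 2)⁻¹) ^ 2 * (((n : ℝ) + 2) *
            (‖u ω (n + 1)‖ ^ 2 + ((n : ℝ) + 1) * ‖d ω n‖ ^ 2)) := by gcongr
        _ = _ := by field_simp
    refine (avg_mono hp _ hconv).trans ?_
    rw [avg_const_mul, avg_add, avg_const_mul,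
      avg_succ_of_update_eq hp n (fun ω => ‖d ω n‖ ^ 2) fun ω i => by rw [hdu ω n n i le_rfl],
      inv_mul_le_iff₀ hn]
    have h1 := hub (n + 1)
    push_cast at h1 ⊢
    nlinarith [mul_le_mul_of_nonneg_left ih (by positivity : (0 : ℝ) ≤ n + 1)]

end Estimates

/-- **Theorem SHB.thm (error estimate with noisy data).**  Assume `0 < η i < 1/‖A i‖²`
and that the `x₀`-minimal norm solution `x†` of `A x = y` satisfies the source
condition `x† − x₀ = A* λ†`.  Then the stochastic heavy-ball iterates with noisy data
`y^δ` (`‖y^δ i − y i‖ ≤ δ i`, `δ = (∑ δ i²)^{1/2}`) satisfy, for all `n ≥ 0`,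
`E[‖x^δ n − x†‖²] ≤ 2 p M₀/(c₀ (n+1)) + 2 η̄ n δ²/(c₀ p)`, where
`η̄ = max_i η i`, `c₀ = min_i (1 − η i ‖A i‖²)`, and
`M₀ = ‖x₀ − x†‖² + c₀ ∑_i (1/η i) ‖λ† i‖²`. -/
theorem stmt_10 {p : ℕ} (hp : 0 < p) {X : Type*} [NormedAddCommGroup X]
    [InnerProductSpace ℝ X] [CompleteSpace X]
    {Y : Fin p → Type*} [∀ i, NormedAddCommGroup (Y i)] [∀ i, InnerProductSpace ℝ (Y i)]
    [∀ i, CompleteSpace (Y i)]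
    (A : ∀ i, X →L[ℝ] Y i) (y yδ : ∀ i, Y i) (δi : Fin p → ℝ) (δ : ℝ)
    (hnoise : ∀ i, ‖yδ i - y i‖ ≤ δi i)
    (hδ : δ = Real.sqrt (∑ i, (δi i) ^ 2))
    (η : Fin p → ℝ) (hη : ∀ i, 0 < η i ∧ η i < 1 / ‖A i‖ ^ 2)
    (ηbar c₀ : ℝ)
    (hηbar : IsGreatest (Set.range η) ηbar)
    (hc₀ : IsLeast (Set.range fun i => 1 - η i * ‖A i‖ ^ 2) c₀)
    (x₀ xdag : X)
    (hdag : ∀ i, (A i) xdag = y i)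
    (hmin : ∀ x' : X, (∀ i, (A i) x' = y i) → ‖xdag - x₀‖ ≤ ‖x' - x₀‖)
    (lamdag : ∀ j, Y j)
    (hsource : xdag - x₀ = ∑ j, (A j).adjoint (lamdag j))
    (M₀ : ℝ) (hM₀ : M₀ = ‖x₀ - xdag‖ ^ 2 + c₀ * ∑ i, (η i)⁻¹ * ‖lamdag i‖ ^ 2)
    (xδ : (ℕ → Fin p) → ℕ → X)
    (hxδ0 : ∀ ω, xδ ω 0 = x₀)
    (hxδ : ∀ ω, ∀ n : ℕ, xδ ω (n + 1) = xδ ω n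
      - (((n : ℝ) + 2)⁻¹ * η (ω n)) • ((A (ω n)).adjoint ((A (ω n)) (xδ ω n) - yδ (ω n)))
      + ((n : ℝ) / ((n : ℝ) + 2)) • (xδ ω n - xδ ω (n - 1))) :
    ∀ n : ℕ,
      avg p hp n (fun ω => ‖xδ ω n - xdag‖ ^ 2)
        ≤ 2 * p * M₀ / (c₀ * ((n : ℝ) + 1)) + 2 * ηbar * n * δ ^ 2 / (c₀ * p) := by
  intro n
  have hη0 : ∀ i, 0 < η i := fun i => (hη i).1
  have hc : 0 < c₀ := by
    obtain ⟨i, rfl⟩ := hc₀.1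
    have hA : 0 < ‖A i‖ ^ 2 := one_div_pos.1 ((hη i).1.trans (hη i).2)
    have := (lt_div_iff₀ hA).1 (hη i).2
    simp only
    linarith
  have hcle : ∀ i, c₀ ≤ 1 - η i * ‖A i‖ ^ 2 := fun i => hc₀.2 ⟨i, rfl⟩
  have hp' : (0 : ℝ) < p := by positivity
  have hsplit : ∀ ω, ‖xδ ω n - xdag‖ ^ 2 ≤
      2 * (‖(dualState A η x₀ y ω n).2 - xdag‖ ^ 2
        + ‖(dualState A η x₀ yδ ω n).2 - (dualState A η x₀ y ω n).2‖ ^ 2) := by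
    intro ω
    rw [eq_dualState A η x₀ yδ ω (xδ ω) (hxδ0 ω) (hxδ ω) n]
    rw [← sub_add_sub_cancel _ (dualState A η x₀ y ω n).2 xdag]
    refine (pow_le_pow_left₀ (norm_nonneg _) (norm_add_le _ _) 2).trans ?_
    nlinarith [sq_nonneg (‖(dualState A η x₀ yδ ω n).2 - (dualState A η x₀ y ω n).2‖
      - ‖(dualState A η x₀ y ω n).2 - xdag‖)]
  refine (avg_mono hp n hsplit).trans ?_
  rw [avg_const_mul, avg_add]
  have h1 := avg_norm_sq_le_of_exact hp A hη0 hc hcle y x₀ xdag hdag lamdag hsource n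
  have h2 := avg_norm_sq_sub_le hp A hη0 hc hcle y yδ δi hnoise x₀ n
  rw [← hM₀] at h1
  have h3 : ∑ i, η i * δi i ^ 2 ≤ ηbar * δ ^ 2 := by
    rw [hδ, Real.sq_sqrt (Finset.sum_nonneg fun i _ => sq_nonneg _), Finset.mul_sum]
    exact Finset.sum_le_sum fun i _ =>
      mul_le_mul_of_nonneg_right (hηbar.2 ⟨i, rfl⟩) (sq_nonneg _)
  have h4 : (n : ℝ) * ((∑ i, η i * δi i ^ 2) / (c₀ * p)) ≤ n * (ηbar * δ ^ 2 / (c₀ * p)) := by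
    gcongr
  calc _ ≤ 2 * (p * M₀ / (c₀ * ((n : ℝ) + 1)) + n * (ηbar * δ ^ 2 / (c₀ * p))) := by
        gcongr
        exact h2.trans h4
    _ = _ := by ring
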